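/- Fix an integer n ≥ 2 and a sequence a = (a_1,…,a_n) of nonnegative integers. Then the specialization of the Tesler polynomial P(a) ∈ ℤ[q,t] at t = 1 equals ∑_{μ ⊆ λ(a)} q^{|λ(a)| − |μ|}, the sum running over all partitions μ contained in λ(a). -/

import Mathlib

open Finset MvPolynomial

noncomputable section

/-- A Tesler matrix associated to the sequence `a`. -/
def IsTesler (n : ℕ) (a : Fin n → ℕ) (M : Fin n → Fin n → ℕ) : Prop :=
  (∀ i j : Fin n, j < i → M i j = 0) ∧
    ∀ i : Fin n,
      M i i + ∑ j ∈ univ.filter (fun j => j < i), M j i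
        = a i + ∑ j ∈ univ.filter (fun j => i < j), M i j

/-- `[m]_{q,t} = ∑_{i=0}^{m-1} q^i t^{m-1-i}` in `ℤ[q,t]`, with `q = X 0`, `t = X 1`. -/
def qtNum (m : ℕ) : MvPolynomial (Fin 2) ℤ :=
  ∑ i ∈ range m, X 0 ^ i * X 1 ^ (m - 1 - i)

/-- `𝔸(0) = 1` and `𝔸(m) = -(1-q)(1-t)[m]_{q,t}` for `m ≥ 1`. -/
def Aqt (m : ℕ) : MvPolynomial (Fin 2) ℤ :=
  if m = 0 then 1 else -((1 - X 0) * (1 - X 1)) * qtNum m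

/-- `B(m) = [m+1]_{q,t} - [m]_{q,t}`. -/
def Bqt (m : ℕ) : MvPolynomial (Fin 2) ℤ := qtNum (m + 1) - qtNum m

/-- The weight `∏_{i} B(m_{i,i+1}) ∏_{j>i+1} 𝔸(m_{ij})` of a Tesler matrix. -/
def teslerWeight (n : ℕ) (M : Fin n → Fin n → ℕ) : MvPolynomial (Fin 2) ℤ :=
  ∏ p ∈ univ.filter (fun p : Fin n × Fin n => p.1 < p.2),
    (if (p.1 : ℕ) + 1 = (p.2 : ℕ) then Bqt (M p.1 p.2) else Aqt (M p.1 p.2))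

/-- The Tesler polynomial `P(a)`, a sum over all Tesler matrices associated to `a`. -/
def teslerPoly (n : ℕ) (a : Fin n → ℕ) : MvPolynomial (Fin 2) ℤ :=
  ∑ᶠ M ∈ {M : Fin n → Fin n → ℕ | IsTesler n a M}, teslerWeight n M

/-- The partition `λ(a) = (a_2 + ⋯ + a_n, a_3 + ⋯ + a_n, …, a_n)`. -/
def lam (n : ℕ) (a : Fin n → ℕ) (k : Fin (n - 1)) : ℕ :=
  ∑ i ∈ univ.filter (fun i : Fin n => (k : ℕ) < (i : ℕ)), a i

/-!
At `t = 1` the factor `𝔸(m)` vanishes for `m ≥ 1` and `B(m)` becomes `q ^ m`, so only the Tesler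
matrices supported on the diagonal and the superdiagonal survive, each with weight `q` raised to the
sum of its superdiagonal.

Summing the Tesler equations over the indices `i ≥ k` cancels the off-diagonal entries with both
indices `≥ k` and leaves the cut identity
`∑_{i ≥ k} m_{ii} + ∑_{j < k ≤ i} m_{ji} = ∑_{i ≥ k} a_i`.
For a bidiagonal matrix with diagonal `d` the cut is the single entry `m_{k-1,k}`, so the
superdiagonal is `λ(a) - λ(d)`. As `λ` is a bijection from sequences with a prescribed sum to
partitions bounded by that sum, `M ↦ λ(d)` identifies the surviving matrices with the partitions
`μ ⊆ λ(a)`, and the weight of `M` is `q ^ (|λ(a)| - |μ|)`.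
-/

section TailSums

variable {ι R : Type*} [AddCommMonoid R]

theorem sum_Ici_injective [PartialOrder ι] [LocallyFiniteOrderTop ι] [WellFoundedGT ι]
    [IsRightCancelAdd R] :
    Function.Injective fun (f : ι → R) (k : ι) ↦ ∑ i ∈ Ici k, f i := by
  intro f g hfg
  funext k
  induction k using WellFoundedGT.induction with
  | ind k ih =>
    have htail : ∑ i ∈ Ioi k, f i = ∑ i ∈ Ioi k, g i :=
      sum_congr rfl fun i hi ↦ ih i (mem_Ioi.mp hi)
    have hk : ∑ i ∈ Ici k, f i = ∑ i ∈ Ici k, g i := congrFun hfg k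
    rwa [← add_sum_Ioi_eq_sum_Ici, ← add_sum_Ioi_eq_sum_Ici, htail, add_left_inj] at hk

theorem sum_Ici_sum_Iio [LinearOrder ι] [LocallyFiniteOrder ι] [LocallyFiniteOrderTop ι]
    [LocallyFiniteOrderBot ι] (f : ι → ι → R) (k : ι) :
    ∑ i ∈ Ici k, ∑ j ∈ Iio i, f j i
      = ∑ i ∈ Ici k, ∑ j ∈ Iio k, f j i + ∑ i ∈ Ici k, ∑ j ∈ Ioi i, f i j := by
  have hsplit (i : ι) (hi : i ∈ Ici k) :
      ∑ j ∈ Iio i, f j i = ∑ j ∈ Iio k, f j i + ∑ j ∈ Ico k i, f j i := by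
    have hki : k ≤ i := mem_Ici.mp hi
    have hunion : Iio i = Iio k ∪ Ico k i := by
      ext j
      simp only [mem_union, mem_Iio, mem_Ico]
      grind
    have hdisj : Disjoint (Iio k) (Ico k i) :=
      disjoint_left.mpr fun j hj hj' ↦ (mem_Iio.mp hj).not_ge (mem_Ico.mp hj').1
    rw [hunion, sum_union hdisj]
  rw [sum_congr rfl hsplit, sum_add_distrib]
  congr 1
  refine sum_comm' fun i j ↦ ?_
  simp only [mem_Ici, mem_Ico, mem_Ioi]
  grind

end TailSums

section Partitions

variable {m : ℕ}

theorem lam_antitone (n : ℕ) (a : Fin n → ℕ) : Antitone (lam n a) := fun _ _ hkl ↦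
  sum_le_sum_of_subset <| monotone_filter_right univ fun _ _ hi ↦
    lt_of_le_of_lt (Fin.le_def.mp hkl) hi

theorem lam_eq_sum_Ici (a : Fin (m + 1) → ℕ) (k : Fin m) :
    lam (m + 1) a k = ∑ i ∈ Ici k.succ, a i := by
  refine sum_congr ?_ fun _ _ ↦ rfl
  ext i
  simp [Fin.le_def]

theorem eq_of_sum_eq_of_lam_eq {d e : Fin (m + 1) → ℕ} (hsum : ∑ i, d i = ∑ i, e i)
    (hlam : lam (m + 1) d = lam (m + 1) e) : d = e := by
  refine sum_Ici_injective (funext <| Fin.cases ?_ fun k ↦ ?_)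
  · simpa using hsum
  · simpa only [lam_eq_sum_Ici] using congrFun hlam k

theorem exists_sum_eq_lam_eq {s : ℕ} {μ : Fin m → ℕ} (hμ : Antitone μ) (hs : ∀ k, μ k ≤ s) :
    ∃ d : Fin (m + 1) → ℕ, ∑ i, d i = s ∧ lam (m + 1) d = μ := by
  induction m generalizing s with
  | zero => exact ⟨fun _ ↦ s, by simp, funext fun k ↦ k.elim0⟩
  | succ m ih =>
    obtain ⟨d, hsum, hlam⟩ := ih (hμ.comp_monotone (Fin.strictMono_succ (n := m)).monotone)
      fun k ↦ hμ k.succ.zero_le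
    refine ⟨Fin.cons (s - μ 0) d, ?_, funext <| Fin.cases ?_ fun k ↦ ?_⟩
    · rw [Fin.sum_cons, hsum, Nat.sub_add_cancel (hs 0)]
    · rw [lam_eq_sum_Ici, Fin.sum_Ici_succ]
      simpa using hsum
    · rw [lam_eq_sum_Ici, Fin.sum_Ici_succ]
      simpa only [lam_eq_sum_Ici, Fin.cons_succ, Function.comp_apply] using congrFun hlam k

end Partitions

section TeslerMatrices

variable {n : ℕ} {a : Fin n → ℕ} {M : Fin n → Fin n → ℕ}

theorem isTesler_iff_cut : IsTesler n a M ↔ (∀ i j, j < i → M i j = 0) ∧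
    ∀ k, ∑ i ∈ Ici k, M i i + ∑ i ∈ Ici k, ∑ j ∈ Iio k, M j i = ∑ i ∈ Ici k, a i := by
  refine and_congr_right' ?_
  simp only [filter_gt_eq_Iio, filter_lt_eq_Ioi]
  rw [← funext_iff, ← sum_Ici_injective.eq_iff, funext_iff]
  refine forall_congr' fun k ↦ ?_
  simp only [sum_add_distrib, sum_Ici_sum_Iio, ← add_assoc, add_left_inj]

theorem IsTesler.apply_le_sum (hM : IsTesler n a M) (i j : Fin n) : M i j ≤ ∑ k, a k := by
  obtain ⟨hlower, hcut⟩ := isTesler_iff_cut.mp hM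
  have htotal : ∑ k ∈ Ici j, a k ≤ ∑ k, a k := sum_le_sum_of_subset (subset_univ _)
  rcases lt_trichotomy i j with hij | rfl | hji
  · have hcross : M i j ≤ ∑ i' ∈ Iio j, M i' j :=
      single_le_sum_of_canonicallyOrdered (f := fun i' ↦ M i' j) (mem_Iio.mpr hij)
    have hcut_le : ∑ i' ∈ Iio j, M i' j ≤ ∑ j' ∈ Ici j, ∑ i' ∈ Iio j, M i' j' :=
      single_le_sum_of_canonicallyOrdered (f := fun j' ↦ ∑ i' ∈ Iio j, M i' j') (mem_Ici.mpr le_rfl)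
    have := hcut j
    omega
  · have hdiag : M i i ≤ ∑ k ∈ Ici i, M k k :=
      single_le_sum_of_canonicallyOrdered (f := fun k ↦ M k k) (mem_Ici.mpr le_rfl)
    have := hcut i
    omega
  · simp [hlower i j hji]

theorem finite_setOf_isTesler (n : ℕ) (a : Fin n → ℕ) : {M | IsTesler n a M}.Finite :=
  (Set.finite_Iic fun _ _ ↦ ∑ k, a k).subset fun _ hM ↦ hM.apply_le_sum

end TeslerMatrices

section LowerHessenberg

/-- A lower Hessenberg matrix: its entries above the superdiagonal vanish. An upper-triangular
matrix is lower Hessenberg exactly when it is supported on the diagonal and the superdiagonal. -/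
def IsLowerHessenberg {n : ℕ} (M : Fin n → Fin n → ℕ) : Prop :=
  ∀ i j : Fin n, (i : ℕ) + 1 < j → M i j = 0

variable {m : ℕ}

theorem IsLowerHessenberg.sum_cut {M : Fin (m + 1) → Fin (m + 1) → ℕ} (hM : IsLowerHessenberg M)
    (k : Fin m) : ∑ i ∈ Ici k.succ, ∑ j ∈ Iio k.succ, M j i = M k.castSucc k.succ := by
  rw [← sum_product', sum_eq_single_of_mem (k.succ, k.castSucc) (by simp)]
  rintro ⟨i, j⟩ hij hne
  simp only [mem_product, mem_Ici, mem_Iio, Fin.le_def, Fin.lt_def, Fin.val_succ] at hij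
  simp only [ne_eq, Prod.mk.injEq, Fin.ext_iff, Fin.val_succ, Fin.val_castSucc] at hne
  exact hM j i (by omega)

theorem IsLowerHessenberg.isTesler_iff {a : Fin (m + 1) → ℕ} {M : Fin (m + 1) → Fin (m + 1) → ℕ}
    (hM : IsLowerHessenberg M) : IsTesler (m + 1) a M ↔ (∀ i j, j < i → M i j = 0) ∧
      ∑ i, M i i = ∑ i, a i ∧
        ∀ k : Fin m, lam (m + 1) (fun i ↦ M i i) k + M k.castSucc k.succ = lam (m + 1) a k := by
  rw [isTesler_iff_cut]
  refine and_congr_right' (Fin.forall_fin_succ.trans (and_congr ?_ ?_))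
  · have hempty : Iio (0 : Fin (m + 1)) = ∅ := Iio_bot
    simp [hempty]
  · simp only [hM.sum_cut, lam_eq_sum_Ici]

theorem IsLowerHessenberg.ext {M N : Fin (m + 1) → Fin (m + 1) → ℕ}
    (hM : IsLowerHessenberg M) (hN : IsLowerHessenberg N)
    (hM_lower : ∀ i j, j < i → M i j = 0) (hN_lower : ∀ i j, j < i → N i j = 0)
    (hdiag : ∀ i, M i i = N i i)
    (hsuper : ∀ k : Fin m, M k.castSucc k.succ = N k.castSucc k.succ) : M = N := by
  funext i j
  rcases lt_trichotomy i j with hij | rfl | hji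
  · obtain ⟨k, rfl⟩ := Fin.exists_succ_eq_of_ne_zero hij.ne_bot
    rcases (Fin.le_castSucc_iff.mpr hij).eq_or_lt with rfl | hik
    · exact hsuper k
    · have hgap : (i : ℕ) + 1 < k.succ := by simpa [Fin.lt_def] using hik
      rw [hM _ _ hgap, hN _ _ hgap]
  · exact hdiag i
  · rw [hM_lower i j hji, hN_lower i j hji]

/-- The upper bidiagonal matrix with diagonal `d` and superdiagonal `x`. -/
def bidiagonal (d : Fin (m + 1) → ℕ) (x : Fin m → ℕ) (i j : Fin (m + 1)) : ℕ :=
  if i = j then d i else Fin.cases 0 (fun k ↦ if i = k.castSucc then x k else 0) j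

variable (d : Fin (m + 1) → ℕ) (x : Fin m → ℕ)

theorem bidiagonal_self (i : Fin (m + 1)) : bidiagonal d x i i = d i := if_pos rfl

theorem bidiagonal_castSucc_succ (k : Fin m) : bidiagonal d x k.castSucc k.succ = x k := by
  simp [bidiagonal, Fin.ext_iff]

theorem bidiagonal_of_lt {i j : Fin (m + 1)} (hji : j < i) : bidiagonal d x i j = 0 := by
  cases j using Fin.cases <;> grind [bidiagonal, Fin.lt_def, Fin.val_castSucc]

theorem isLowerHessenberg_bidiagonal : IsLowerHessenberg (bidiagonal d x) := by
  intro i j hij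
  cases j using Fin.cases <;> grind [bidiagonal, Fin.val_castSucc]

theorem bijOn_lam_diagonal (a : Fin (m + 1) → ℕ) :
    Set.BijOn (fun M : Fin (m + 1) → Fin (m + 1) → ℕ ↦ (lam (m + 1) fun i ↦ M i i : Fin m → ℕ))
      {M | IsTesler (m + 1) a M ∧ IsLowerHessenberg M}
      {μ : Fin m → ℕ | Antitone μ ∧ μ ≤ lam (m + 1) a} := by
  refine ⟨?mapsTo, ?injOn, ?surjOn⟩
  case mapsTo =>
    rintro M ⟨hT, hH⟩
    exact ⟨lam_antitone _ _, fun k ↦ Nat.le.intro ((hH.isTesler_iff.mp hT).2.2 k)⟩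
  case injOn =>
    rintro M ⟨hMT, hMH⟩ N ⟨hNT, hNH⟩ hlam
    obtain ⟨hM_lower, hM_sum, hM_super⟩ := hMH.isTesler_iff.mp hMT
    obtain ⟨hN_lower, hN_sum, hN_super⟩ := hNH.isTesler_iff.mp hNT
    refine hMH.ext hNH hM_lower hN_lower ?_ fun k ↦ ?_
    · exact congrFun (eq_of_sum_eq_of_lam_eq (hM_sum.trans hN_sum.symm) hlam)
    · have hk := congrFun hlam k
      have := hM_super k
      have := hN_super k
      grind
  case surjOn =>
    rintro μ ⟨hμ, hle⟩
    have hbound (k : Fin m) : μ k ≤ ∑ i, a i :=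
      (hle k).trans (sum_le_sum_of_subset (filter_subset _ _))
    obtain ⟨d, hsum, hlam⟩ := exists_sum_eq_lam_eq (m := m) hμ hbound
    have hH := isLowerHessenberg_bidiagonal (m := m) d fun k ↦ lam (m + 1) a k - μ k
    refine ⟨_, ⟨hH.isTesler_iff.mpr ⟨fun _ _ ↦ bidiagonal_of_lt _ _, ?_, fun k ↦ ?_⟩, hH⟩, ?_⟩
    · simpa only [bidiagonal_self] using hsum
    · simpa only [bidiagonal_self, bidiagonal_castSucc_succ, hlam] using Nat.add_sub_cancel' (hle k)
    · simpa only [bidiagonal_self] using hlam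

end LowerHessenberg

section Specialization

/-- The specialization `t = 1`, as a ring homomorphism `ℤ[q,t] → ℤ[q]`. -/
def evalTOne : MvPolynomial (Fin 2) ℤ →+* Polynomial ℤ :=
  eval₂Hom Polynomial.C ![Polynomial.X, 1]

theorem evalTOne_qtNum (m : ℕ) : evalTOne (qtNum m) = ∑ i ∈ range m, Polynomial.X ^ i := by
  simp [evalTOne, qtNum]

theorem evalTOne_Bqt (m : ℕ) : evalTOne (Bqt m) = Polynomial.X ^ m := by
  rw [Bqt, map_sub, evalTOne_qtNum, evalTOne_qtNum, sum_range_succ, add_sub_cancel_left]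

theorem evalTOne_Aqt (m : ℕ) : evalTOne (Aqt m) = if m = 0 then 1 else 0 := by
  rw [Aqt]
  split_ifs <;> simp [evalTOne]

theorem isLowerHessenberg_of_evalTOne_teslerWeight_ne_zero {n : ℕ} {M : Fin n → Fin n → ℕ}
    (hM : evalTOne (teslerWeight n M) ≠ 0) : IsLowerHessenberg M := by
  intro i j hij
  by_contra hne
  refine hM ?_
  rw [teslerWeight, map_prod]
  refine prod_eq_zero (i := (i, j)) (by simpa using Fin.lt_def.mpr (by omega)) ?_
  rw [if_neg hij.ne, evalTOne_Aqt, if_neg hne]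

theorem evalTOne_teslerPoly (n : ℕ) (a : Fin n → ℕ) :
    evalTOne (teslerPoly n a)
      = ∑ᶠ M ∈ {M | IsTesler n a M ∧ IsLowerHessenberg M}, evalTOne (teslerWeight n M) := by
  have hmap : evalTOne (teslerPoly n a)
      = ∑ᶠ M ∈ {M | IsTesler n a M}, evalTOne (teslerWeight n M) :=
    evalTOne.toAddMonoidHom.map_finsum_mem _ (finite_setOf_isTesler n a)
  rw [hmap]
  refine finsum_mem_inter_support_eq' _ _ _ fun M hM ↦ ?_
  exact (and_iff_left (isLowerHessenberg_of_evalTOne_teslerWeight_ne_zero hM)).symm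

theorem IsLowerHessenberg.evalTOne_teslerWeight {m : ℕ} {M : Fin (m + 1) → Fin (m + 1) → ℕ}
    (hM : IsLowerHessenberg M) :
    evalTOne (teslerWeight (m + 1) M) = Polynomial.X ^ ∑ k : Fin m, M k.castSucc k.succ := by
  rw [teslerWeight, map_prod, ← prod_pow_eq_pow_sum]
  symm
  refine prod_of_injOn (fun k ↦ (k.castSucc, k.succ)) ?_ (fun k _ ↦ by simp) ?_ fun k _ ↦ ?_
  · exact fun k _ l _ hkl ↦ Fin.succ_injective m (congrArg Prod.snd hkl)
  · rintro ⟨i, j⟩ hij hnot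
    have hlt : i < j := by simpa using hij
    obtain ⟨k, rfl⟩ := Fin.exists_succ_eq_of_ne_zero hlt.ne_bot
    have hne : (i : ℕ) + 1 ≠ k.succ := fun h ↦
      hnot ⟨k, by simp, by simpa [Fin.ext_iff] using h.symm⟩
    rw [if_neg hne, evalTOne_Aqt, if_pos (hM i k.succ (by omega))]
  · rw [if_pos (by simp), evalTOne_Bqt]

theorem evalTOne_teslerWeight_eq_pow_sub {m : ℕ} {a : Fin (m + 1) → ℕ}
    {M : Fin (m + 1) → Fin (m + 1) → ℕ} (hT : IsTesler (m + 1) a M) (hH : IsLowerHessenberg M) :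
    evalTOne (teslerWeight (m + 1) M)
      = Polynomial.X ^
          (∑ k : Fin m, lam (m + 1) a k - ∑ k : Fin m, lam (m + 1) (fun i ↦ M i i) k) := by
  have hsum : ∑ k : Fin m, lam (m + 1) a k
      = ∑ k : Fin m, lam (m + 1) (fun i ↦ M i i) k + ∑ k : Fin m, M k.castSucc k.succ := by
    rw [← sum_add_distrib]
    exact sum_congr rfl fun k _ ↦ ((hH.isTesler_iff.mp hT).2.2 k).symm
  rw [hH.evalTOne_teslerWeight, hsum, Nat.add_sub_cancel_left]

end Specialization

theorem teslerPoly_t_eq_one (n : ℕ) (hn : 2 ≤ n) (a : Fin n → ℕ) :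
    MvPolynomial.eval₂ Polynomial.C ![Polynomial.X, 1] (teslerPoly n a)
      = ∑ᶠ μ ∈ {μ : Fin (n - 1) → ℕ |
            (∀ k l : Fin (n - 1), k ≤ l → μ l ≤ μ k) ∧ ∀ k, μ k ≤ lam n a k},
          (Polynomial.X : Polynomial ℤ) ^ ((∑ k, lam n a k) - (∑ k, μ k)) := by
  obtain ⟨m, rfl⟩ : ∃ m, n = m + 1 := ⟨n - 1, by omega⟩
  calc
    evalTOne (teslerPoly (m + 1) a)
      = ∑ᶠ M ∈ {M | IsTesler (m + 1) a M ∧ IsLowerHessenberg M},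
          evalTOne (teslerWeight (m + 1) M) := evalTOne_teslerPoly (m + 1) a
    _ = ∑ᶠ μ ∈ {μ : Fin m → ℕ | Antitone μ ∧ μ ≤ lam (m + 1) a},
          Polynomial.X ^ (∑ k : Fin m, lam (m + 1) a k - ∑ k, μ k) :=
      finsum_mem_eq_of_bijOn _ (bijOn_lam_diagonal a) fun _ hM ↦
        evalTOne_teslerWeight_eq_pow_sub hM.1 hM.2
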